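/- arXiv:2404.04822 — 3 statements merged into one kernel-verified Lean document; each statement's English description precedes it below -/
import Mathlib

section
/- On the responsive domain ℛ, every marginal rule satisfying individual rationality (IR) also satisfies balancedness (BAL) and the worst-endowment lower bound (WELB). -/
attribute [local instance] Classical.propDecidable

namespace Realloc

/-- A strict preference over bundles: a strict total order on `Finset O`. -/
structure Pref (O : Type) : Type where
  strict : Finset O → Finset O → Prop
  total : ∀ X Y : Finset O, strict X Y ∨ X = Y ∨ strict Y X
  irrefl : ∀ X : Finset O, ¬ strict X X
  trans : ∀ X Y Z : Finset O, strict X Y → strict Y Z → strict X Z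

/-- The weak ("at least as good as") relation associated with a strict preference. -/
def Pref.weak {O : Type} (p : Pref O) (X Y : Finset O) : Prop :=
  p.strict X Y ∨ X = Y

/-- An allocation: nonempty pairwise disjoint bundles whose union is all of `O`. -/
structure Allocation (N O : Type) : Type where
  bundle : N → Finset O
  nonempty : ∀ i : N, (bundle i).Nonempty
  disj : ∀ i j : N, i ≠ j → ∀ o : O, o ∈ bundle i → o ∉ bundle j
  cover : ∀ o : O, ∃ i : N, o ∈ bundle i

variable {N O : Type}

/-- Two preferences induce the same marginal (singleton) ranking over objects. -/
def MargEq (p q : Pref O) : Prop :=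
  ∀ x y : O, p.strict {x} {y} ↔ q.strict {x} {y}

/-- Responsive preferences. -/
def Responsive [DecidableEq O] (p : Pref O) : Prop :=
  ∀ (X : Finset O) (y z : O), y ∉ X → z ∉ X →
    (p.strict (insert y X) (insert z X) ↔ p.strict {y} {z})

/-- Lexicographic preferences: `X` is preferred to `Y` iff the best object of the
symmetric difference belongs to `X`. -/
def Lexicographic [DecidableEq O] (p : Pref O) : Prop :=
  ∀ X Y : Finset O, X ≠ Y →
    (p.strict X Y ↔
      ∃ x ∈ X \ Y, ∀ y ∈ (X \ Y) ∪ (Y \ X), y ≠ x → p.strict {x} {y})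

/-- Conditionally lexicographic preferences. -/
def CondLex [DecidableEq O] (p : Pref O) : Prop :=
  ∀ X Y : Finset O, Disjoint X Y → X.Nonempty →
    ∃! x : O, x ∈ X ∧ ∀ Z : Finset O, Z ⊆ X.erase x → p.strict (insert x Y) (Y ∪ Z)

/-- Monotonic preferences. -/
def Monot (p : Pref O) : Prop :=
  ∀ X Y : Finset O, Y ⊆ X → p.weak X Y

/-- `p'` is a subset-drop strategy for `p` (relative to endowment `ωi`):
some set `X ⊆ O ∖ ωi` is moved to the bottom of the marginal ranking, preserving
the relative marginal order within `X` and within its complement. -/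
def SubsetDropStrategy (ωi : Finset O) (p p' : Pref O) : Prop :=
  ∃ X : Set O, (∀ x ∈ X, x ∉ ωi) ∧
    (∀ x ∈ X, ∀ y ∈ X, (p.strict {x} {y} ↔ p'.strict {x} {y})) ∧
    (∀ x ∉ X, ∀ y ∉ X, (p.strict {x} {y} ↔ p'.strict {x} {y})) ∧
    (∀ x ∈ X, ∀ y ∉ X, p'.strict {y} {x})

/-- `p'` is a drop strategy for `p`: a single object `x ∉ ωi` is moved to the bottom. -/
def DropStrategy (ωi : Finset O) (p p' : Pref O) : Prop :=
  ∃ x : O, x ∉ ωi ∧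
    (∀ u v : O, u ≠ x → v ≠ x → (p.strict {u} {v} ↔ p'.strict {u} {v})) ∧
    (∀ y : O, y ≠ x → p'.strict {y} {x})

/-- `p'` is a truncation strategy for `p`: the tail set
`{o ∈ O ∖ ωi : {x} R {o}}` (for some object `x`) is moved to the bottom. -/
def TruncationStrategy (ωi : Finset O) (p p' : Pref O) : Prop :=
  ∃ x : O,
    (∀ u v : O, (u ∉ ωi ∧ p.weak {x} {u}) → (v ∉ ωi ∧ p.weak {x} {v}) →
      (p.strict {u} {v} ↔ p'.strict {u} {v})) ∧
    (∀ u v : O, ¬(u ∉ ωi ∧ p.weak {x} {u}) → ¬(v ∉ ωi ∧ p.weak {x} {v}) →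
      (p.strict {u} {v} ↔ p'.strict {u} {v})) ∧
    (∀ u v : O, (u ∉ ωi ∧ p.weak {x} {u}) → ¬(v ∉ ωi ∧ p.weak {x} {v}) →
      p'.strict {v} {u})

/-- There is a Pareto-improving trading cycle at the assignment `μ`:
a cyclic sequence of `k+1 ≥ 1` distinct objects and distinct agents, each object owned
(at `μ`) by its agent, such that every agent on the cycle strictly gains by swapping
the object she relinquishes for the object she points to. -/
def ParetoImprovingCycleAt [DecidableEq O] (pref : N → Pref O) (μ : N → Finset O) : Prop :=
  ∃ (k : ℕ) (obj : Fin (k + 1) → O) (ag : Fin (k + 1) → N),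
    Function.Injective obj ∧ Function.Injective ag ∧
    (∀ ℓ : Fin (k + 1), obj ℓ ∈ μ (ag ℓ)) ∧
    (∀ ℓ : Fin (k + 1),
      (pref (ag ℓ)).strict ((insert (obj (ℓ + 1)) (μ (ag ℓ))).erase (obj ℓ)) (μ (ag ℓ)))

/-- Individual-good efficiency of an assignment at a profile. -/
def IGEat [DecidableEq O] (pref : N → Pref O) (μ : N → Finset O) : Prop :=
  ¬ ParetoImprovingCycleAt pref μ

/-- `ν` Pareto dominates `μ` at the profile `pref`. -/
def ParetoDominates (pref : N → Pref O) (ν μ : N → Finset O) : Prop :=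
  (∀ i, (pref i).weak (ν i) (μ i)) ∧ ∃ j, (pref j).strict (ν j) (μ j)

/-- Pareto efficiency of an assignment at a profile. -/
def ParetoEffAt (pref : N → Pref O) (μ : N → Finset O) : Prop :=
  ∀ ν : Allocation N O, ¬ ParetoDominates pref ν.bundle μ

/-- The marginally most-preferred object of a (nonempty) finite set of objects. -/
noncomputable def Pref.best [Nonempty O] (p : Pref O) (S : Finset O) : O :=
  if h : ∃ x : O, x ∈ S ∧ ∀ y ∈ S, p.weak {x} {y} then h.choose
  else Classical.arbitrary O

/-- The conditionally most-preferred object of `S` given the already-held bundle `Y`. -/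
noncomputable def Pref.cbest [Nonempty O] [DecidableEq O] (p : Pref O) (S Y : Finset O) : O :=
  if h : ∃ x : O, x ∈ S ∧ ∀ Z : Finset O, Z ⊆ S.erase x → p.strict (insert x Y) (Y ∪ Z)
  then h.choose else Classical.arbitrary O

/-- The initial owner of an object. -/
noncomputable def Allocation.owner (ω : Allocation N O) (o : O) : N :=
  (ω.cover o).choose

/-- One pass of the generalized TTC algorithm, with fuel.  At each step every agent points
to her marginally best remaining object and every remaining object points to its owner;
the objects lying on cycles of this functional graph (the periodic points of `g`) are
traded: the owner of a cycling object receives the object she points to. -/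
noncomputable def TTCaux [Nonempty O] [DecidableEq O] (pref : N → Pref O) (own : O → N) :
    ℕ → Finset O → N → Finset O
  | 0, _, _ => ∅
  | fuel + 1, S, i =>
      let g : O → O := fun o => (pref (own o)).best S
      let C : Finset O := S.filter fun o => ∃ k : ℕ, 0 < k ∧ g^[k] o = o
      if S.Nonempty then
        ((C.filter fun o => own o = i).image g) ∪ TTCaux pref own fuel (S \ C) i
      else ∅

/-- The generalized Top Trading Cycles rule: the bundle received by agent `i`. -/
noncomputable def TTC [Fintype O] [Nonempty O] [DecidableEq O]
    (pref : N → Pref O) (ω : Allocation N O) (i : N) : Finset O :=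
  TTCaux pref ω.owner (Fintype.card O + 1) Finset.univ i

/-- One pass of the Augmented TTC algorithm, with fuel: agents point to their
conditionally most-preferred remaining object given the bundle assigned so far. -/
noncomputable def ATTCaux [Nonempty O] [DecidableEq O] (pref : N → Pref O) (own : O → N) :
    ℕ → Finset O → (N → Finset O) → N → Finset O
  | 0, _, μ => μ
  | fuel + 1, S, μ =>
      let g : O → O := fun o => (pref (own o)).cbest S (μ (own o))
      let C : Finset O := S.filter fun o => ∃ k : ℕ, 0 < k ∧ g^[k] o = o
      if S.Nonempty then
        ATTCaux pref own fuel (S \ C) (fun j => μ j ∪ ((C.filter fun o => own o = j).image g))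
      else μ

/-- The Augmented Top Trading Cycles rule: the bundle received by agent `i`. -/
noncomputable def ATTC [Fintype O] [Nonempty O] [DecidableEq O]
    (pref : N → Pref O) (ω : Allocation N O) (i : N) : Finset O :=
  ATTCaux pref ω.owner (Fintype.card O + 1) Finset.univ (fun _ => ∅) i

/-- Conditional marginal preference of `p` given the bundle `Y`:
`x` is conditionally better than `y`. -/
def CMarg [DecidableEq O] (p : Pref O) (Y : Finset O) (x y : O) : Prop :=
  p.strict ((insert x Y).erase y) ((insert y Y).erase x)

/-- Weak conditional marginal preference. -/
def CMargWeak [DecidableEq O] (p : Pref O) (Y : Finset O) (x y : O) : Prop :=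
  CMarg p Y x y ∨ x = y

/-- Drop strategy on the conditionally lexicographic domain: `x ∉ ωi` becomes the worst,
with preferences over bundles avoiding `x` unchanged. -/
def DropStrategyCL (ωi : Finset O) (p p' : Pref O) : Prop :=
  ∃ x : O, x ∉ ωi ∧
    (∀ Y : Finset O, Y.Nonempty → x ∉ Y → p'.strict Y {x}) ∧
    (∀ Y Z : Finset O, x ∉ Y → x ∉ Z → (p'.strict Y Z ↔ p.strict Y Z))

section Rules

variable [DecidableEq O]

/-- Balancedness of a rule on the domain `D`. -/
def RBAL (D : Pref O → Prop) (ω : Allocation N O)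
    (φ : (N → Pref O) → Allocation N O) : Prop :=
  ∀ P : N → Pref O, (∀ i, D (P i)) → ∀ i, ((φ P).bundle i).card = (ω.bundle i).card

/-- Individual-good efficiency of a rule on the domain `D`. -/
def RIGE (D : Pref O → Prop) (φ : (N → Pref O) → Allocation N O) : Prop :=
  ∀ P : N → Pref O, (∀ i, D (P i)) → IGEat P ((φ P).bundle)

/-- Pareto efficiency of a rule on the domain `D`. -/
def RPE (D : Pref O → Prop) (φ : (N → Pref O) → Allocation N O) : Prop :=
  ∀ P : N → Pref O, (∀ i, D (P i)) → ParetoEffAt P ((φ P).bundle)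

/-- Individual rationality of a rule on the domain `D`. -/
def RIR (D : Pref O → Prop) (ω : Allocation N O)
    (φ : (N → Pref O) → Allocation N O) : Prop :=
  ∀ P : N → Pref O, (∀ i, D (P i)) → ∀ i, (P i).weak ((φ P).bundle i) (ω.bundle i)

/-- The worst-endowment lower bound of a rule on the domain `D`: no agent receives an
object marginally worse than the marginally worst object of her endowment. -/
def RWELB (D : Pref O → Prop) (ω : Allocation N O)
    (φ : (N → Pref O) → Allocation N O) : Prop :=
  ∀ P : N → Pref O, (∀ i, D (P i)) → ∀ i, ∀ o ∈ (φ P).bundle i,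
    ∀ w ∈ ω.bundle i, (∀ y ∈ ω.bundle i, (P i).weak {y} {w}) → (P i).weak {o} {w}

/-- Marginality of a rule on the domain `D`. -/
def RMAR (D : Pref O → Prop) (φ : (N → Pref O) → Allocation N O) : Prop :=
  ∀ P P' : N → Pref O, (∀ i, D (P i)) → (∀ i, D (P' i)) →
    (∀ i, MargEq (P i) (P' i)) → ∀ i, (φ P).bundle i = (φ P').bundle i

variable [DecidableEq N]

/-- Truncation-proofness of a rule on the domain `D`. -/
def RTP (D : Pref O → Prop) (ω : Allocation N O)
    (φ : (N → Pref O) → Allocation N O) : Prop :=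
  ∀ P : N → Pref O, (∀ i, D (P i)) → ∀ i : N, ∀ p' : Pref O, D p' →
    TruncationStrategy (ω.bundle i) (P i) p' →
    (P i).weak ((φ P).bundle i) ((φ (Function.update P i p')).bundle i)

/-- Drop strategy-proofness of a rule on the domain `D`. -/
def RDSP (D : Pref O → Prop) (ω : Allocation N O)
    (φ : (N → Pref O) → Allocation N O) : Prop :=
  ∀ P : N → Pref O, (∀ i, D (P i)) → ∀ i : N, ∀ p' : Pref O, D p' →
    DropStrategy (ω.bundle i) (P i) p' →
    (P i).weak ((φ P).bundle i) ((φ (Function.update P i p')).bundle i)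

/-- Subset-drop strategy-proofness of a rule on the domain `D`. -/
def RSDSP (D : Pref O → Prop) (ω : Allocation N O)
    (φ : (N → Pref O) → Allocation N O) : Prop :=
  ∀ P : N → Pref O, (∀ i, D (P i)) → ∀ i : N, ∀ p' : Pref O, D p' →
    SubsetDropStrategy (ω.bundle i) (P i) p' →
    (P i).weak ((φ P).bundle i) ((φ (Function.update P i p')).bundle i)

/-- Worst-endowment lower bound on the conditionally lexicographic domain, formulated
with conditional marginal preferences. -/
def RWELBCL (D : Pref O → Prop) (ω : Allocation N O)
    (φ : (N → Pref O) → Allocation N O) : Prop :=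
  ∀ P : N → Pref O, (∀ i, D (P i)) → ∀ i, ∀ o ∈ (φ P).bundle i,
    ∀ w ∈ ω.bundle i,
      (∀ y ∈ ω.bundle i, CMargWeak (P i) ((φ P).bundle i) y w) →
      CMargWeak (P i) ((φ P).bundle i) o w

/-- Drop strategy-proofness on the conditionally lexicographic domain. -/
def RDSPCL (D : Pref O → Prop) (ω : Allocation N O)
    (φ : (N → Pref O) → Allocation N O) : Prop :=
  ∀ P : N → Pref O, (∀ i, D (P i)) → ∀ i : N, ∀ p' : Pref O, D p' →
    DropStrategyCL (ω.bundle i) (P i) p' →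
    (P i).weak ((φ P).bundle i) ((φ (Function.update P i p')).bundle i)

end Rules

/-- Agent `i`'s opportunity set under TTC when reporting `p`: the set of bundles
she may receive as others' (responsive) reports vary. -/
def Opp [Fintype O] [Nonempty O] [DecidableEq O] (ω : Allocation N O) (i : N)
    (p : Pref O) : Set (Finset O) :=
  {A | ∃ Q : N → Pref O, (∀ j, Responsive (Q j)) ∧ Q i = p ∧ TTC Q ω i = A}


theorem exists_pref {O : Type} [Fintype O] [DecidableEq O] (p : Pref O) (U : O → Prop)
    (hU : ∀ y z, p.strict {y} {z} → U z → U y) :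
    ∃ q : Pref O, Responsive q ∧ MargEq p q ∧
      ∀ X Y, q.weak X Y → (Y.filter U).card ≤ (X.filter U).card := by
  obtain ⟨r, hr⟩ : ∃ r : O → ℕ, ∀ a b, p.strict {a} {b} ↔ r b < r a := by
    have key : ∀ a b : O, p.strict {a} {b} →
        (Finset.univ.filter fun x => p.strict {b} {x}).card <
        (Finset.univ.filter fun x => p.strict {a} {x}).card := by
      intro a b h
      apply Finset.card_lt_card
      rw [Finset.ssubset_iff_of_subset]
      · exact ⟨b, by simpa using h, by simpa using p.irrefl {b}⟩
      · intro x hx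
        simp only [Finset.mem_filter, Finset.mem_univ, true_and] at hx ⊢
        exact p.trans _ _ _ h hx
    refine ⟨fun a => (Finset.univ.filter fun x => p.strict {a} {x}).card, fun a b =>
      ⟨key a b, fun h => ?_⟩⟩
    rcases p.total {a} {b} with h1 | h1 | h1
    · exact h1
    · rw [Finset.singleton_inj] at h1
      subst h1
      exact absurd h (lt_irrefl _)
    · exact absurd h (key b a h1).asymm
  have rinj : Function.Injective r := by
    intro a b h
    rcases p.total {a} {b} with h1 | h1 | h1
    · have := (hr _ _).1 h1
      omega
    · exact Finset.singleton_inj.1 h1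
    · have := (hr _ _).1 h1
      omega
  let A : Finset O → ℕ := fun X => (X.filter U).card
  let B : Finset O → ℕ := fun X => ∑ o ∈ X, 2 ^ r o
  have hB : Function.Injective B := by
    intro X Y h
    have h2 : ∑ k ∈ X.image r, 2 ^ k = ∑ k ∈ Y.image r, 2 ^ k := by
      rw [Finset.sum_image (fun a _ b _ h => rinj h),
        Finset.sum_image (fun a _ b _ h => rinj h)]
      exact h
    exact Finset.image_injective rinj (Finset.geomSum_injective (le_refl 2) h2)
  have hA1 : ∀ (X : Finset O) y, y ∉ X → A (insert y X) = A X + if U y then 1 else 0 := by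
    intro X y hy
    simp only [A, Finset.filter_insert]
    split_ifs with h
    · rw [Finset.card_insert_of_notMem]
      simp [hy]
    · rfl
  have hB1 : ∀ (X : Finset O) y, y ∉ X → B (insert y X) = 2 ^ r y + B X := by
    intro X y hy
    exact Finset.sum_insert hy
  let q : Pref O :=
    { strict := fun X Y => A Y < A X ∨ (A Y = A X ∧ B Y < B X)
      total := by
        intro X Y
        by_cases h : X = Y
        · exact Or.inr (Or.inl h)
        · have : B X ≠ B Y := fun h' => h (hB h')
          omega
      irrefl := by intro X; omega
      trans := by intro X Y Z; omega }
  have hq : ∀ (X : Finset O) (y z : O), y ∉ X → z ∉ X →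
      (q.strict (insert y X) (insert z X) ↔ p.strict {y} {z}) := by
    intro X y z hy hz
    change (A _ < A _ ∨ (A _ = A _ ∧ B _ < B _)) ↔ _
    rw [hA1 X y hy, hA1 X z hz, hB1 X y hy, hB1 X z hz, hr]
    have e : 2 ^ r z < 2 ^ r y ↔ r z < r y := Nat.pow_lt_pow_iff_right (by norm_num)
    have h1 := hU y z
    have h2 := hU z y
    rw [hr] at h1 h2
    have h3 : r y = r z → y = z := fun h => rinj h
    by_cases hyz : y = z
    · subst hyz
      simp
    · have : r y ≠ r z := fun h => hyz (h3 h)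
      by_cases u : U y <;> by_cases v : U z <;> simp only [u, v, if_true, if_false] <;>
        simp only [u, v] at h1 h2 <;> grind
  have hm : MargEq p q := by
    intro x y
    have := hq ∅ x y (by simp) (by simp)
    simpa using this.symm
  refine ⟨q, ?_, hm, ?_⟩
  · intro X y z hy hz
    rw [hq X y z hy hz]
    exact hm y z
  · rintro X Y (h | h)
    · change A Y < A X ∨ (A Y = A X ∧ B Y < B X) at h
      change A Y ≤ A X
      omega
    · rw [h]

theorem sum_card_alloc {N O : Type} [Fintype N] [Fintype O] [DecidableEq N] [DecidableEq O]
    (μ : Allocation N O) : ∑ i, (μ.bundle i).card = Fintype.card O := by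
  rw [← Finset.card_biUnion]
  · rw [← Finset.card_univ]
    congr 1
    ext o
    simpa using μ.cover o
  · intro i _ j _ hij
    exact Finset.disjoint_left.2 (μ.disj i j hij)

theorem card_key {N O : Type} [Fintype N] [Fintype O] [DecidableEq N] [DecidableEq O]
    (ω : Allocation N O) (φ : (N → Pref O) → Allocation N O)
    (hMAR : RMAR Responsive φ) (hIR : RIR Responsive ω φ)
    (P : N → Pref O) (hP : ∀ i, Responsive (P i)) (i : N) (U : O → Prop)
    (hU : ∀ y z, (P i).strict {y} {z} → U z → U y) :
    ((ω.bundle i).filter U).card ≤ (((φ P).bundle i).filter U).card := by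
  obtain ⟨q, hq, hm, hc⟩ := exists_pref (P i) U hU
  have hD : ∀ j, Responsive (Function.update P i q j) := by
    intro j
    by_cases h : j = i
    · subst h
      simpa using hq
    · simpa [h] using hP j
  have hE : ∀ j, MargEq (P j) (Function.update P i q j) := by
    intro j
    by_cases h : j = i
    · subst h
      simpa using hm
    · intro x y
      simp [h]
  have h1 := hIR _ hD i
  rw [← hMAR P _ hP hD hE i, Function.update_self] at h1
  exact hc _ _ h1

/-- On the responsive domain, every marginal rule satisfying IR
also satisfies BAL and WELB. -/
theorem stmt0 {N O : Type} [Fintype N] [Fintype O] [DecidableEq N] [DecidableEq O]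
    (hN : 2 ≤ Fintype.card N) (hNO : Fintype.card N ≤ Fintype.card O)
    (ω : Allocation N O) (φ : (N → Pref O) → Allocation N O)
    (hMAR : RMAR Responsive φ) (hIR : RIR Responsive ω φ) :
    RBAL Responsive ω φ ∧ RWELB Responsive ω φ := by
  have bal : RBAL Responsive ω φ := by
    intro P hP i
    have hle : ∀ j ∈ Finset.univ, (ω.bundle j).card ≤ ((φ P).bundle j).card := by
      intro j _
      simpa using card_key ω φ hMAR hIR P hP j (fun _ => True) (by simp)
    have := (Finset.sum_eq_sum_iff_of_le hle).1
      ((sum_card_alloc ω).trans (sum_card_alloc (φ P)).symm)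
    exact (this i (Finset.mem_univ i)).symm
  refine ⟨bal, ?_⟩
  intro P hP i o ho w hw hworst
  have h := card_key ω φ hMAR hIR P hP i (fun x => (P i).weak {x} {w}) (by
    rintro y z hyz (h | h)
    · exact Or.inl ((P i).trans _ _ _ hyz h)
    · rw [h] at hyz
      exact Or.inl hyz)
  rw [Finset.filter_true_of_mem hworst, ← bal P hP i] at h
  have h2 := Finset.eq_of_subset_of_card_le (Finset.filter_subset _ _) h
  rw [← h2] at ho
  exact (Finset.mem_filter.1 ho).2


end Realloc
end

section
/- On the lexicographic domain ℒ, a rule satisfies balancedness (BAL), individual-good efficiency (IGE), the worst-endowment lower bound (WELB), and truncation-proofness (TP) if and only if it equals the generalized Top Trading Cycles rule TTC. -/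
attribute [local instance] Classical.propDecidable

namespace Realloc

variable {N O : Type}

/-! ### Basic facts on preferences -/

lemma Pref.asymm' (p : Pref O) {X Y : Finset O} (h : p.strict X Y) : ¬ p.strict Y X :=
  fun h' => p.irrefl _ (p.trans _ _ _ h h')

lemma Pref.weak_strict (p : Pref O) {X Y Z : Finset O} (h : p.weak X Y) (h' : p.strict Y Z) :
    p.strict X Z := by
  rcases h with h | rfl
  · exact p.trans _ _ _ h h'
  · exact h'

lemma Pref.strict_weak (p : Pref O) {X Y Z : Finset O} (h : p.strict X Y) (h' : p.weak Y Z) :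
    p.strict X Z := by
  rcases h' with h' | rfl
  · exact p.trans _ _ _ h h'
  · exact h

lemma Pref.weak_trans (p : Pref O) {X Y Z : Finset O} (h : p.weak X Y) (h' : p.weak Y Z) :
    p.weak X Z := by
  rcases h' with h' | rfl
  · exact Or.inl (p.weak_strict h h')
  · exact h

lemma Pref.not_strict (p : Pref O) {X Y : Finset O} : ¬ p.strict X Y ↔ p.weak Y X := by
  constructor
  · intro h
    rcases p.total X Y with h' | h' | h'
    · exact absurd h' h
    · exact Or.inr h'.symm
    · exact Or.inl h'
  · rintro (h | rfl)
    · exact p.asymm' h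
    · exact p.irrefl _

lemma Pref.not_weak (p : Pref O) {X Y : Finset O} : ¬ p.weak X Y ↔ p.strict Y X := by
  rw [← p.not_strict, not_not]

lemma Pref.strict_of_weak_ne (p : Pref O) {x y : O} (h : p.weak {x} {y}) (hne : x ≠ y) :
    p.strict {x} {y} := by
  rcases h with h | h
  · exact h
  · exact absurd (Finset.singleton_injective h) hne

noncomputable def Pref.rank [Fintype O] (p : Pref O) (o : O) : ℕ :=
  (Finset.univ.filter fun y => p.strict {o} {y}).card

lemma Pref.rank_lt [Fintype O] (p : Pref O) (u v : O) :
    p.rank v < p.rank u ↔ p.strict {u} {v} := by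
  have key : ∀ u v : O, p.strict {u} {v} → p.rank v < p.rank u := by
    intro u v h
    apply Finset.card_lt_card
    refine ⟨?_, ?_⟩
    · intro y hy
      simp only [Finset.mem_filter, Finset.mem_univ, true_and] at hy ⊢
      exact p.trans _ _ _ h hy
    · intro hs
      have : v ∈ (Finset.univ.filter fun y => p.strict {v} {y}) := hs (by simpa using h)
      simp only [Finset.mem_filter, Finset.mem_univ, true_and] at this
      exact p.irrefl _ this
  constructor
  · intro h
    by_contra hc
    rw [p.not_strict] at hc
    rcases hc with hc | hc
    · exact absurd (key _ _ hc) (by omega)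
    · rw [Finset.singleton_injective hc] at h
      omega
  · exact key u v

lemma Pref.rank_inj [Fintype O] (p : Pref O) : Function.Injective p.rank := by
  intro u v h
  rcases p.total {u} {v} with h' | h' | h'
  · rw [← p.rank_lt] at h'; omega
  · exact Finset.singleton_injective h'
  · rw [← p.rank_lt] at h'; omega

lemma Pref.exists_best [Fintype O] (p : Pref O) {S : Finset O} (hS : S.Nonempty) :
    ∃ x : O, x ∈ S ∧ ∀ y ∈ S, p.weak {x} {y} := by
  obtain ⟨x, hx, h⟩ := Finset.exists_max_image S p.rank hS
  refine ⟨x, hx, fun y hy => ?_⟩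
  rw [← p.not_strict, ← p.rank_lt]
  exact not_lt.2 (h y hy)

lemma Pref.best_spec [Fintype O] [Nonempty O] (p : Pref O) {S : Finset O} (hS : S.Nonempty) :
    p.best S ∈ S ∧ ∀ y ∈ S, p.weak {p.best S} {y} := by
  have h := p.exists_best hS
  unfold Pref.best
  rw [dif_pos h]
  exact h.choose_spec

lemma Pref.best_unique [Fintype O] [Nonempty O] (p : Pref O) {S : Finset O} {x : O} (hx : x ∈ S)
    (h : ∀ y ∈ S, p.weak {x} {y}) : p.best S = x := by
  have hb := p.best_spec ⟨x, hx⟩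
  by_contra hne
  exact p.asymm' (p.strict_of_weak_ne (hb.2 x hx) hne)
    (p.strict_of_weak_ne (h _ hb.1) (Ne.symm hne))

lemma lex_strict_of [DecidableEq O] {p : Pref O} (hp : Lexicographic p) {X Y : Finset O} {x : O}
    (hx : x ∈ X) (hxY : x ∉ Y)
    (h : ∀ y, y ≠ x → (y ∈ X ∧ y ∉ Y ∨ y ∈ Y ∧ y ∉ X) → p.strict {x} {y}) : p.strict X Y := by
  have hne : X ≠ Y := by rintro rfl; exact hxY hx
  refine (hp X Y hne).2 ⟨x, by simp [hx, hxY], fun y hy hyx => h y hyx ?_⟩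
  simpa using hy

lemma lex_strict_dest [DecidableEq O] {p : Pref O} (hp : Lexicographic p) {X Y : Finset O}
    (h : p.strict X Y) : ∃ x, x ∈ X ∧ x ∉ Y ∧
      ∀ y, y ≠ x → (y ∈ X ∧ y ∉ Y ∨ y ∈ Y ∧ y ∉ X) → p.strict {x} {y} := by
  have hne : X ≠ Y := by rintro rfl; exact p.irrefl _ h
  obtain ⟨x, hx, hy⟩ := (hp X Y hne).1 h
  rw [Finset.mem_sdiff] at hx
  refine ⟨x, hx.1, hx.2, fun y hyx hyy => hy y ?_ hyx⟩
  simpa using hyy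

lemma lex_swap [DecidableEq O] {p : Pref O} (hp : Lexicographic p) {μ : Finset O} {a o : O}
    (ho : o ∈ μ) :
    p.strict ((insert a μ).erase o) μ ↔ a ∉ μ ∧ p.strict {a} {o} := by
  constructor
  · intro h
    obtain ⟨x, hx, hxm, hy⟩ := lex_strict_dest hp h
    have hxa : x = a := by
      simp only [Finset.mem_erase, Finset.mem_insert] at hx
      tauto
    subst hxa
    refine ⟨hxm, hy o ?_ ?_⟩
    · rintro rfl; exact hxm ho
    · right; simp [ho]
  · rintro ⟨ha, h⟩
    have hao : a ≠ o := by rintro rfl; exact ha ho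
    refine lex_strict_of hp (x := a) (by simp [hao]) ha ?_
    intro y hya hy
    have : y = o := by
      simp only [Finset.mem_erase, Finset.mem_insert] at hy
      tauto
    rw [this]; exact h

lemma lex_weak_union [DecidableEq O] {p : Pref O} (hp : Lexicographic p) {Z A B : Finset O}
    (hA : ∀ z ∈ Z, z ∉ A) (hB : ∀ z ∈ Z, z ∉ B) (h : p.weak A B) : p.weak (Z ∪ A) (Z ∪ B) := by
  rcases h with h | rfl
  · left
    obtain ⟨x, hx, hxm, hy⟩ := lex_strict_dest hp h
    refine lex_strict_of hp (x := x) (by simp [hx]) ?_ ?_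
    · simp only [Finset.mem_union, not_or]
      exact ⟨fun hz => hA x hz hx, hxm⟩
    · intro y hyx hyy
      refine hy y hyx ?_
      simp only [Finset.mem_union] at hyy
      tauto
  · exact Or.inr rfl

/-- A lexicographic preference from an injective ranking. -/
noncomputable def lexPref (f : O → ℕ) (hf : Function.Injective f) : Pref O where
  strict X Y := toColex (Y.map ⟨f, hf⟩) < toColex (X.map ⟨f, hf⟩)
  total X Y := by
    rcases lt_trichotomy (toColex (Y.map ⟨f, hf⟩)) (toColex (X.map ⟨f, hf⟩)) with h | h | h
    · exact Or.inl h
    · right; left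
      exact (Finset.map_injective _ (toColex.injective h)).symm
    · exact Or.inr (Or.inr h)
  irrefl X := lt_irrefl _
  trans X Y Z h h' := lt_trans h' h

lemma lexPref_iff [DecidableEq O] (f : O → ℕ) (hf : Function.Injective f) (X Y : Finset O) :
    (lexPref f hf).strict X Y ↔ ∃ x ∈ X, x ∉ Y ∧ ∀ y ∈ Y, y ∉ X → f y < f x := by
  show toColex (Y.map ⟨f, hf⟩) < toColex (X.map ⟨f, hf⟩) ↔ _
  rw [Finset.Colex.toColex_lt_toColex_iff_exists_forall_lt]
  simp [hf.eq_iff]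

lemma lexPref_single [DecidableEq O] (f : O → ℕ) (hf : Function.Injective f) (x y : O) :
    (lexPref f hf).strict {x} {y} ↔ f y < f x := by
  rw [lexPref_iff]
  simp only [Finset.mem_singleton]
  constructor
  · rintro ⟨a, rfl, hne, h⟩
    exact h y rfl (Ne.symm hne)
  · intro h
    refine ⟨x, rfl, ?_, ?_⟩
    · rintro rfl; omega
    · rintro _ rfl _; exact h

lemma lexPref_lex [DecidableEq O] (f : O → ℕ) (hf : Function.Injective f) :
    Lexicographic (lexPref f hf) := by
  intro X Y hne
  constructor
  · intro h
    obtain ⟨x, hx, hxY, hy⟩ := (lexPref_iff f hf X Y).1 h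
    have hn : (X \ Y).Nonempty := ⟨x, by simp [hx, hxY]⟩
    obtain ⟨m, hm, hmax⟩ := Finset.exists_max_image (X \ Y) f hn
    refine ⟨m, hm, fun y hyy hym => ?_⟩
    rw [lexPref_single]
    rcases Finset.mem_union.1 hyy with h1 | h1
    · exact lt_of_le_of_ne (hmax y h1) (fun h => hym (hf h))
    · rw [Finset.mem_sdiff] at h1
      exact lt_of_lt_of_le (hy y h1.1 h1.2) (hmax x (by simp [hx, hxY]))
  · rintro ⟨x, hx, hy⟩
    rw [Finset.mem_sdiff] at hx
    refine (lexPref_iff f hf X Y).2 ⟨x, hx.1, hx.2, fun y hyY hyX => ?_⟩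
    rw [← lexPref_single f hf]
    refine hy y (by simp [hyY, hyX]) ?_
    rintro rfl; exact hyX hx.1

/-- Existence of truncations in the lexicographic domain. -/
lemma exists_trunc [Fintype O] [DecidableEq O] (p : Pref O) (X : O → Prop) :
    ∃ q : Pref O, Lexicographic q ∧
      (∀ u v, X u → X v → (p.strict {u} {v} ↔ q.strict {u} {v})) ∧
      (∀ u v, ¬ X u → ¬ X v → (p.strict {u} {v} ↔ q.strict {u} {v})) ∧
      (∀ u v, X u → ¬ X v → q.strict {v} {u}) := by
  have hb : ∀ o, p.rank o ≤ Fintype.card O := fun o => Finset.card_le_univ _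
  let f : O → ℕ := fun o => if X o then p.rank o else p.rank o + (Fintype.card O + 1)
  have hf : Function.Injective f := by
    intro u v h
    have h1 := hb u
    have h2 := hb v
    apply p.rank_inj
    simp only [f] at h
    split_ifs at h <;> omega
  refine ⟨lexPref f hf, lexPref_lex f hf, ?_, ?_, ?_⟩
  · intro u v hu hv
    rw [lexPref_single, ← p.rank_lt]; simp [f, hu, hv]
  · intro u v hu hv
    rw [lexPref_single, ← p.rank_lt]; simp [f, hu, hv]
  · intro u v hu hv
    rw [lexPref_single]; simp only [f, hu, hv, if_true, if_false]
    have := hb u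
    omega

/-! ### One step of TTC -/

noncomputable def gS [Nonempty O] (pref : N → Pref O) (own : O → N) (S : Finset O) : O → O :=
  fun o => (pref (own o)).best S

noncomputable def Cyc [Nonempty O] (pref : N → Pref O) (own : O → N) (S : Finset O) : Finset O :=
  S.filter fun o => ∃ k : ℕ, 0 < k ∧ (gS pref own S)^[k] o = o

lemma TTCaux_succ [Nonempty O] [DecidableEq O] (pref : N → Pref O) (own : O → N) (f : ℕ)
    {S : Finset O} (hS : S.Nonempty) (i : N) :
    TTCaux pref own (f + 1) S i =
      (((Cyc pref own S).filter fun o => own o = i).image (gS pref own S)) ∪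
        TTCaux pref own f (S \ Cyc pref own S) i := by
  rw [TTCaux]
  simp only [hS, if_true]
  rfl

lemma TTCaux_empty [Nonempty O] [DecidableEq O] (pref : N → Pref O) (own : O → N) (f : ℕ) (i : N) :
    TTCaux pref own f ∅ i = ∅ := by
  cases f <;> simp [TTCaux]

section step
variable [Fintype O] [Nonempty O] (pref : N → Pref O) (own : O → N) {S : Finset O}

lemma gS_mem (hS : S.Nonempty) (o : O) : gS pref own S o ∈ S := ((pref (own o)).best_spec hS).1

lemma gS_best {y : O} (hy : y ∈ S) (o : O) : (pref (own o)).weak {gS pref own S o} {y} :=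
  ((pref (own o)).best_spec ⟨y, hy⟩).2 y hy

lemma gS_own {o o' : O} (h : own o = own o') : gS pref own S o = gS pref own S o' := by
  simp [gS, h]

lemma mem_Cyc (hS : S.Nonempty) (o : O) :
    o ∈ Cyc pref own S ↔ o ∈ Function.periodicPts (gS pref own S) := by
  rw [Function.mem_periodicPts]
  simp only [Cyc, Finset.mem_filter, Function.IsPeriodicPt, Function.IsFixedPt]
  constructor
  · rintro ⟨_, h⟩; exact h
  · rintro ⟨k, hk, h⟩
    refine ⟨?_, k, hk, h⟩
    obtain ⟨m, rfl⟩ : ∃ m, k = m + 1 := ⟨k - 1, by omega⟩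
    rw [Function.iterate_succ_apply'] at h
    rw [← h]
    exact gS_mem pref own hS _

lemma Cyc_sub : Cyc pref own S ⊆ S := Finset.filter_subset _ _

lemma Cyc_maps (hS : S.Nonempty) {o : O} (h : o ∈ Cyc pref own S) :
    gS pref own S o ∈ Cyc pref own S := by
  rw [mem_Cyc _ _ hS] at *
  exact (Function.bijOn_periodicPts _).mapsTo h

lemma Cyc_inj (hS : S.Nonempty) {o o' : O} (h : o ∈ Cyc pref own S) (h' : o' ∈ Cyc pref own S)
    (he : gS pref own S o = gS pref own S o') : o = o' := by
  rw [mem_Cyc _ _ hS] at *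
  exact (Function.bijOn_periodicPts _).injOn h h' he

lemma Cyc_surj (hS : S.Nonempty) {o : O} (h : o ∈ Cyc pref own S) :
    ∃ o' ∈ Cyc pref own S, gS pref own S o' = o := by
  rw [mem_Cyc _ _ hS] at h
  obtain ⟨o', h', he⟩ := (Function.bijOn_periodicPts (gS pref own S)).surjOn h
  exact ⟨o', (mem_Cyc _ _ hS _).2 h', he⟩

lemma Cyc_nonempty (hS : S.Nonempty) : (Cyc pref own S).Nonempty := by
  obtain ⟨x⟩ := ‹Nonempty O›
  have key : ∀ n m : ℕ, n < m → (gS pref own S)^[n] x = (gS pref own S)^[m] x →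
      (Cyc pref own S).Nonempty := by
    intro n m h he
    refine ⟨(gS pref own S)^[n] x, (mem_Cyc _ _ hS _).2 ?_⟩
    rw [Function.mem_periodicPts]
    refine ⟨m - n, by omega, ?_⟩
    show (gS pref own S)^[m - n] _ = _
    rw [← Function.iterate_add_apply, he]
    congr 2; omega
  obtain ⟨n, m, hne, he⟩ := Finite.exists_ne_map_eq_of_infinite (fun n => (gS pref own S)^[n] x)
  rcases lt_or_gt_of_ne hne with h | h
  · exact key _ _ h he
  · exact key _ _ h he.symm

lemma Cyc_card [DecidableEq O] (hS : S.Nonempty) : (S \ Cyc pref own S).card < S.card := by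
  apply Finset.card_lt_card
  refine Finset.sdiff_ssubset (Cyc_sub pref own) (Cyc_nonempty pref own hS)

end step
/-! ### Global properties of TTC -/

noncomputable def fil (own : O → N) (C : Finset O) (i : N) : Finset O :=
  C.filter fun o => own o = i

lemma mem_fil (own : O → N) (C : Finset O) (i : N) (o : O) :
    o ∈ fil own C i ↔ o ∈ C ∧ own o = i := by
  simp [fil]

lemma TTCaux_succ' [Nonempty O] [DecidableEq O] (pref : N → Pref O) (own : O → N) (f : ℕ)
    {S : Finset O} (hS : S.Nonempty) (i : N) :
    TTCaux pref own (f + 1) S i =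
      ((fil own (Cyc pref own S) i).image (gS pref own S)) ∪
        TTCaux pref own f (S \ Cyc pref own S) i := TTCaux_succ pref own f hS i

section glob
variable [Fintype O] [Nonempty O] [DecidableEq O] (pref : N → Pref O) (own : O → N)

lemma img_sub {S : Finset O} (hS : S.Nonempty) (i : N) :
    ((Cyc pref own S).filter fun o => own o = i).image (gS pref own S) ⊆ Cyc pref own S := by
  intro y hy
  obtain ⟨o, ho, rfl⟩ := Finset.mem_image.1 hy
  exact Cyc_maps pref own hS (Finset.mem_filter.1 ho).1

lemma img_card {S : Finset O} (hS : S.Nonempty) (i : N) :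
    (((Cyc pref own S).filter fun o => own o = i).image (gS pref own S)).card =
      ((Cyc pref own S).filter fun o => own o = i).card := by
  apply Finset.card_image_of_injOn
  intro a ha b hb h
  exact Cyc_inj pref own hS (Finset.mem_filter.1 ha).1 (Finset.mem_filter.1 hb).1 h

lemma img_card' {S : Finset O} (hS : S.Nonempty) (i : N) :
    ((fil own (Cyc pref own S) i).image (gS pref own S)).card =
      (fil own (Cyc pref own S) i).card := img_card pref own hS i

lemma TTCaux_sub (f : ℕ) (S : Finset O) (i : N) : TTCaux pref own f S i ⊆ S := by
  induction f generalizing S with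
  | zero => simp [TTCaux]
  | succ f ih =>
    rcases S.eq_empty_or_nonempty with rfl | hS
    · simp [TTCaux_empty]
    rw [TTCaux_succ _ _ _ hS]
    refine Finset.union_subset ((img_sub pref own hS i).trans (Cyc_sub pref own)) ?_
    exact (ih _).trans Finset.sdiff_subset

lemma img_disj {S : Finset O} (hS : S.Nonempty) (f : ℕ) (S' : Finset O) (i : N)
    (hS' : S' ⊆ S \ Cyc pref own S) :
    Disjoint (((Cyc pref own S).filter fun o => own o = i).image (gS pref own S)) S' := by
  rw [Finset.disjoint_left]
  intro y hy hy'
  exact (Finset.mem_sdiff.1 (hS' hy')).2 (img_sub pref own hS i hy)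

lemma filter_split (S C : Finset O) (hC : C ⊆ S) (q : O → Prop) [DecidablePred q] :
    (S.filter q).card = (C.filter q).card + ((S \ C).filter q).card := by
  rw [← Finset.card_union_of_disjoint, ← Finset.filter_union, Finset.union_sdiff_of_subset hC]
  exact Finset.disjoint_filter_filter Finset.disjoint_sdiff

lemma TTCaux_card (f : ℕ) (S : Finset O) (hf : S.card ≤ f) (i : N) :
    (TTCaux pref own f S i).card = (S.filter fun o => own o = i).card := by
  induction f generalizing S with
  | zero =>
    have : S = ∅ := by simpa using hf
    subst this; simp [TTCaux]
  | succ f ih =>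
    rcases S.eq_empty_or_nonempty with rfl | hS
    · simp [TTCaux_empty]
    have hc := Cyc_card pref own hS
    rw [TTCaux_succ _ _ _ hS, Finset.card_union_of_disjoint, img_card pref own hS, ih _ (by omega),
      filter_split S _ (Cyc_sub pref own)]
    exact img_disj pref own hS f _ i (TTCaux_sub _ _ _ _ _)

lemma TTCaux_upper (f : ℕ) (S : Finset O) (hf : S.card ≤ f) (i : N) (U : O → Prop)
    (hU : ∀ a c, U a → (pref i).strict {c} {a} → U c) :
    (S.filter fun o => own o = i ∧ U o).card ≤ ((TTCaux pref own f S i).filter U).card := by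
  induction f generalizing S with
  | zero =>
    have : S = ∅ := by simpa using hf
    subst this; simp [TTCaux]
  | succ f ih =>
    rcases S.eq_empty_or_nonempty with rfl | hS
    · simp [TTCaux_empty]
    have hc := Cyc_card pref own hS
    have hd := img_disj pref own hS f _ i (TTCaux_sub pref own f _ i)
    rw [TTCaux_succ _ _ _ hS, Finset.filter_union, Finset.card_union_of_disjoint
      (Finset.disjoint_filter_filter hd), filter_split S _ (Cyc_sub pref own)]
    refine Nat.add_le_add ?_ (ih _ (by omega))
    rw [← Finset.card_image_of_injOn (f := gS pref own S)
      (s := (Cyc pref own S).filter fun o => own o = i ∧ U o)]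
    · apply Finset.card_le_card
      intro y hy
      obtain ⟨o, ho, rfl⟩ := Finset.mem_image.1 hy
      rw [Finset.mem_filter] at ho
      obtain ⟨hoC, rfl, hoU⟩ := ho
      rw [Finset.mem_filter]
      refine ⟨Finset.mem_image_of_mem _ (by simp [hoC]), ?_⟩
      rcases gS_best pref own (Cyc_sub pref own hoC) o with h | h
      · exact hU _ _ hoU h
      · rw [Finset.singleton_injective h]; exact hoU
    · intro a ha b hb h
      exact Cyc_inj pref own hS (Finset.mem_filter.1 ha).1 (Finset.mem_filter.1 hb).1 h

lemma TTCaux_stage (f : ℕ) (S : Finset O) : ∃ r : O → ℕ, ∀ i, ∀ o ∈ TTCaux pref own f S i,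
    ∀ y ∈ S, (pref i).strict {y} {o} → r y < r o := by
  induction f generalizing S with
  | zero => exact ⟨fun _ => 0, by simp [TTCaux]⟩
  | succ f ih =>
    rcases S.eq_empty_or_nonempty with rfl | hS
    · exact ⟨fun _ => 0, by simp [TTCaux_empty]⟩
    obtain ⟨r, hr⟩ := ih (S \ Cyc pref own S)
    refine ⟨fun o => if o ∈ Cyc pref own S then 0 else r o + 1, ?_⟩
    intro i o ho y hy hs
    rw [TTCaux_succ _ _ _ hS, Finset.mem_union] at ho
    rcases ho with ho | ho
    · obtain ⟨x, hx, rfl⟩ := Finset.mem_image.1 ho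
      rw [Finset.mem_filter] at hx
      obtain ⟨hxC, rfl⟩ := hx
      exact absurd hs ((pref (own x)).not_strict.2 (gS_best pref own hy x))
    · have h1 := Finset.mem_sdiff.1 (TTCaux_sub _ _ _ _ _ ho)
      simp only [h1.2, if_false]
      split_ifs with hyC
      · omega
      · have := hr i o ho y (by simp [hy, hyC]) hs
        omega

lemma TTCaux_IR (f : ℕ) (S : Finset O) (hf : S.card ≤ f) (i : N) (hp : Lexicographic (pref i)) :
    (pref i).weak (TTCaux pref own f S i) (S.filter fun o => own o = i) := by
  rw [← Pref.not_strict]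
  intro h
  obtain ⟨x, hx, hxA, hy⟩ := lex_strict_dest hp h
  have hle := TTCaux_upper pref own f S hf i (fun y => (pref i).weak {y} {x})
    (fun a c ha hc => Or.inl ((pref i).strict_weak hc ha))
  refine absurd hle (not_le.2 (Finset.card_lt_card ⟨?_, ?_⟩))
  · intro y hyA
    rw [Finset.mem_filter] at hyA ⊢
    have hyx : y ≠ x := by rintro rfl; exact hxA hyA.1
    by_contra hc
    have : y ∉ S.filter fun o => own o = i := by
      intro h'
      rw [Finset.mem_filter] at h'
      exact hc ⟨h'.1, h'.2, hyA.2⟩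
    exact (pref i).asymm' (hy y hyx (Or.inr ⟨hyA.1, this⟩))
      ((pref i).strict_of_weak_ne hyA.2 hyx)
  · intro hs
    rw [Finset.mem_filter] at hx
    have : x ∈ (TTCaux pref own f S i).filter fun y => (pref i).weak {y} {x} :=
      hs (Finset.mem_filter.2 ⟨hx.1, hx.2, Or.inr rfl⟩)
    exact hxA (Finset.mem_filter.1 this).1

lemma gS_congr {pref pref' : N → Pref O} {S : Finset O}
    (h : ∀ j, (pref' j).best S = (pref j).best S) : gS pref' own S = gS pref own S := by
  funext o; simp [gS, h]

lemma Cyc_congr {pref pref' : N → Pref O} {S : Finset O}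
    (h : ∀ j, (pref' j).best S = (pref j).best S) : Cyc pref' own S = Cyc pref own S := by
  simp [Cyc, gS_congr own h]

lemma update_best {pref pref' : N → Pref O} {i : N} {p' : Pref O} {S : Finset O}
    (hi : pref' i = p') (hne : ∀ j, j ≠ i → pref' j = pref j)
    (h : p'.best S = (pref i).best S) (j : N) :
    (pref' j).best S = (pref j).best S := by
  by_cases hj : j = i
  · subst hj; rw [hi, h]
  · rw [hne j hj]

lemma trunc_best {p p' : Pref O} {X : O → Prop}
    (h2 : ∀ u v, ¬ X u → ¬ X v → (p.strict {u} {v} ↔ p'.strict {u} {v}))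
    (h3 : ∀ u v, X u → ¬ X v → p'.strict {v} {u}) {S : Finset O} (hS : S.Nonempty)
    (hb : ¬ X (p.best S)) : p'.best S = p.best S := by
  have hs := p.best_spec hS
  refine p'.best_unique hs.1 fun y hy => ?_
  by_cases hy' : X y
  · exact Or.inl (h3 _ _ hy' hb)
  · rcases hs.2 y hy with h | h
    · exact Or.inl ((h2 _ _ hb hy').1 h)
    · exact Or.inr h

lemma TTCaux_TP (i : N) (hp : Lexicographic (pref i)) (p' : Pref O) (x : O)
    (pref' : N → Pref O) (hi : pref' i = p') (hne : ∀ j, j ≠ i → pref' j = pref j)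
    (h2 : ∀ u v : O, ¬(own u ≠ i ∧ (pref i).weak {x} {u}) → ¬(own v ≠ i ∧ (pref i).weak {x} {v}) →
      ((pref i).strict {u} {v} ↔ p'.strict {u} {v}))
    (h3 : ∀ u v : O, (own u ≠ i ∧ (pref i).weak {x} {u}) → ¬(own v ≠ i ∧ (pref i).weak {x} {v}) →
      p'.strict {v} {u})
    (f : ℕ) (S : Finset O) (hf : S.card ≤ f) :
    (pref i).weak (TTCaux pref own f S i) (TTCaux pref' own f S i) := by
  induction f generalizing S with
  | zero => exact Or.inr (by simp [TTCaux])
  | succ f ih =>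
    rcases S.eq_empty_or_nonempty with rfl | hS
    · exact Or.inr (by simp [TTCaux_empty])
    by_cases hb : own ((pref i).best S) ≠ i ∧ (pref i).weak {x} {(pref i).best S}
    · -- from now on she only consumes her endowment
      have hs := (pref i).best_spec hS
      have hX : ∀ u ∈ S, own u ≠ i → (pref i).weak {x} {u} := fun u hu _ =>
        (pref i).weak_trans hb.2 (hs.2 u hu)
      have hcard := TTCaux_card pref' own (f + 1) S hf i
      obtain ⟨U, hUd⟩ : ∃ U : O → Prop, ∀ u, U u ↔ ¬(own u ≠ i ∧ (pref i).weak {x} {u}) :=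
        ⟨_, fun _ => Iff.rfl⟩
      have hup := TTCaux_upper pref' own (f + 1) S hf i U (by
          intro a c ha hc
          rw [hUd] at ha ⊢
          intro hc'
          rw [hi] at hc
          exact p'.asymm' hc (h3 _ _ hc' ha))
      have hsub := TTCaux_sub pref' own (f + 1) S i
      have e : (S.filter fun o => own o = i ∧ U o) = (S.filter fun o => own o = i) := by
        apply Finset.filter_congr
        intro o _
        rw [hUd]
        tauto
      rw [e] at hup
      have hAf : (TTCaux pref' own (f + 1) S i).filter U = TTCaux pref' own (f + 1) S i :=
        Finset.eq_of_subset_of_card_le (Finset.filter_subset _ _) (by omega)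
      have hA : TTCaux pref' own (f + 1) S i = S.filter fun o => own o = i := by
        apply Finset.eq_of_subset_of_card_le _ (by omega)
        intro u hu
        have hu' := hu
        rw [← hAf, Finset.mem_filter, hUd] at hu'
        rw [Finset.mem_filter]
        refine ⟨hsub hu, ?_⟩
        by_contra hc
        exact hu'.2 ⟨hc, hX u (hsub hu) hc⟩
      rw [hA]
      exact TTCaux_IR pref own (f + 1) S hf i hp
    · have hbest := update_best hi hne (trunc_best h2 h3 hS hb)
      have hc := Cyc_card pref own hS
      rw [TTCaux_succ _ _ _ hS, TTCaux_succ _ _ _ hS, gS_congr own hbest, Cyc_congr own hbest]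
      refine lex_weak_union hp ?_ ?_ (ih _ (by omega))
      · exact fun z hz => Finset.disjoint_left.1 (img_disj pref own hS f _ i (TTCaux_sub _ _ _ _ _)) hz
      · exact fun z hz => Finset.disjoint_left.1 (img_disj pref own hS f _ i (TTCaux_sub _ _ _ _ _)) hz

end glob

lemma owner_iff (ω : Allocation N O) (o : O) (i : N) : ω.owner o = i ↔ o ∈ ω.bundle i := by
  have h : o ∈ ω.bundle (ω.owner o) := (ω.cover o).choose_spec
  constructor
  · rintro rfl; exact h
  · intro h'
    by_contra hne
    exact ω.disj _ _ hne o h h'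

lemma owner_filter (ω : Allocation N O) [Fintype O] (i : N) :
    (Finset.univ.filter fun o => ω.owner o = i) = ω.bundle i := by
  ext o; simp [owner_iff]

section backward
variable [Fintype O] [Nonempty O] [DecidableEq O] (ω : Allocation N O)
  (φ : (N → Pref O) → Allocation N O)
  (h : ∀ P : N → Pref O, (∀ i, Lexicographic (P i)) → ∀ i, (φ P).bundle i = TTC P ω i)
include h

lemma back_BAL : RBAL Lexicographic ω φ := by
  intro P hP i
  rw [h P hP, TTC, TTCaux_card _ _ _ _ (by simp), owner_filter]

lemma back_IGE : RIGE Lexicographic φ := by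
  rintro P hP ⟨k, obj, ag, -, -, hmem, himp⟩
  obtain ⟨r, hr⟩ := TTCaux_stage P ω.owner (Fintype.card O + 1) Finset.univ
  have hlt : ∀ ℓ, r (obj (ℓ + 1)) < r (obj ℓ) := by
    intro ℓ
    have := (lex_swap (hP _) (hmem ℓ)).1 (himp ℓ)
    refine hr (ag ℓ) (obj ℓ) ?_ _ (Finset.mem_univ _) this.2
    have hm := hmem ℓ
    rw [h P hP] at hm
    exact hm
  obtain ⟨ℓ, hℓ⟩ := Finite.exists_min (fun ℓ => r (obj ℓ))
  exact absurd (hlt ℓ) (not_lt.2 (hℓ _))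

lemma back_WELB : RWELB Lexicographic ω φ := by
  intro P hP i o ho w hw hworst
  rw [h P hP, TTC] at ho
  have hc := TTCaux_card P ω.owner (Fintype.card O + 1) Finset.univ (by simp) i
  have hu := TTCaux_upper P ω.owner (Fintype.card O + 1) Finset.univ (by simp) i
    (fun y => (P i).weak {y} {w}) (fun a c ha hc => Or.inl ((P i).strict_weak hc ha))
  have e : (Finset.univ.filter fun o => ω.owner o = i ∧ (P i).weak {o} {w}) =
      (Finset.univ.filter fun o => ω.owner o = i) := by
    apply Finset.filter_congr
    intro y _
    rw [owner_iff]
    exact ⟨fun h => h.1, fun h => ⟨h, hworst y h⟩⟩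
  rw [e] at hu
  have := Finset.eq_of_subset_of_card_le (Finset.filter_subset (fun y => (P i).weak {y} {w})
    (TTCaux P ω.owner (Fintype.card O + 1) Finset.univ i)) (by omega)
  rw [← this] at ho
  exact (Finset.mem_filter.1 ho).2

lemma back_TP [DecidableEq N] : RTP Lexicographic ω φ := by
  rintro P hP i p' hp' ⟨x, -, h2, h3⟩
  have hP' : ∀ j, Lexicographic (Function.update P i p' j) := by
    intro j
    by_cases hj : j = i
    · subst hj; simpa using hp'
    · simpa [hj] using hP j
  rw [h P hP, h _ hP', TTC, TTC]
  have ho : ∀ u, u ∉ ω.bundle i ↔ ω.owner u ≠ i := fun u => by rw [Ne, owner_iff]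
  simp only [ho] at h2 h3
  exact TTCaux_TP P ω.owner i (hP i) p' x _ (by simp) (fun j hj => by simp [hj]) h2 h3 _ _ (by simp)

end backward
/-! ### Uniqueness -/

section forward
variable [Fintype N] [Fintype O] [Nonempty O] [DecidableEq O] [DecidableEq N]

noncomputable def szi (ω : Allocation N O) (p : Pref O) (i : N) : ℕ :=
  (Finset.univ.filter fun o => o ∉ ω.bundle i ∧ ∃ w ∈ ω.bundle i, p.strict {o} {w}).card

noncomputable def sz (ω : Allocation N O) (P : N → Pref O) : ℕ := ∑ i, szi ω (P i) i

lemma fwd_key (ω : Allocation N O) (φ : (N → Pref O) → Allocation N O)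
    (hWELB : RWELB Lexicographic ω φ) (hTP : RTP Lexicographic ω φ)
    (P : N → Pref O) (hP : ∀ i, Lexicographic (P i))
    (IH : ∀ Q : N → Pref O, (∀ i, Lexicographic (Q i)) → sz ω Q < sz ω P →
      ∀ i, (φ Q).bundle i = TTC Q ω i)
    (f : ℕ) (S : Finset O) (hS : S.Nonempty)
    (h2 : ∀ (i : N) (p' : Pref O), (∀ S', S ⊆ S' → p'.best S' = (P i).best S') →
      TTC (Function.update P i p') ω i =
        ((φ P).bundle i \ S) ∪ TTCaux (Function.update P i p') ω.owner (f + 1) S i)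
    (h3 : ∀ i, ((φ P).bundle i ∩ S).card = (ω.bundle i ∩ S).card)
    (o : O) (ho : o ∈ Cyc P ω.owner S)
    (hg : gS P ω.owner S o ∉ (φ P).bundle (ω.owner o)) : o ∈ (φ P).bundle (ω.owner o) := by
  obtain ⟨i, hi⟩ : ∃ i, i = ω.owner o := ⟨_, rfl⟩
  obtain ⟨b, hb⟩ : ∃ b, b = gS P ω.owner S o := ⟨_, rfl⟩
  rw [← hi, ← hb] at hg
  rw [← hi]
  have hbb : b = (P i).best S := by rw [hb, hi]; rfl
  have hspec := (P i).best_spec hS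
  rw [← hbb] at hspec
  by_cases hA : ∃ d, d ∉ ω.bundle i ∧ (P i).strict {b} {d} ∧ ∃ w ∈ ω.bundle i, (P i).strict {d} {w}
  · exfalso
    obtain ⟨d, hdω, hbd, w, hw, hdw⟩ := hA
    obtain ⟨q, hq, q1, q2, q3⟩ := exists_trunc (P i) (fun u => u ∉ ω.bundle i ∧ (P i).weak {d} {u})
    have hQ : ∀ j, Lexicographic (Function.update P i q j) := by
      intro j
      by_cases hj : j = i
      · subst hj; simpa using hq
      · simpa [hj] using hP j
    have hbest : ∀ S', S ⊆ S' → q.best S' = (P i).best S' := by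
      intro S' hS'
      refine trunc_best q2 q3 (hS.mono hS') ?_
      rintro ⟨-, hc⟩
      have h1 := ((P i).best_spec (hS.mono hS')).2 b (hS' hspec.1)
      exact (P i).irrefl _ (((P i).strict_weak ((P i).weak_strict h1 hbd) hc))
    have hsz : sz ω (Function.update P i q) < sz ω P := by
      unfold sz
      apply Finset.sum_lt_sum
      · intro j _
        by_cases hj : j = i
        · subst hj
          rw [Function.update_self]
          apply Finset.card_le_card
          intro u hu
          simp only [Finset.mem_filter, Finset.mem_univ, true_and] at hu ⊢
          obtain ⟨hu1, v, hv, huv⟩ := hu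
          refine ⟨hu1, v, hv, ?_⟩
          have hvX : ¬ (v ∉ ω.bundle j ∧ (P j).weak {d} {v}) := fun h => h.1 hv
          by_cases huX : u ∉ ω.bundle j ∧ (P j).weak {d} {u}
          · exact absurd (q3 _ _ huX hvX) (q.asymm' huv)
          · exact (q2 _ _ huX hvX).2 huv
        · simp [hj]
      · refine ⟨i, Finset.mem_univ _, ?_⟩
        rw [Function.update_self]
        apply Finset.card_lt_card
        refine ⟨?_, ?_⟩
        · intro u hu
          simp only [Finset.mem_filter, Finset.mem_univ, true_and] at hu ⊢
          obtain ⟨hu1, v, hv, huv⟩ := hu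
          refine ⟨hu1, v, hv, ?_⟩
          have hvX : ¬ (v ∉ ω.bundle i ∧ (P i).weak {d} {v}) := fun h => h.1 hv
          by_cases huX : u ∉ ω.bundle i ∧ (P i).weak {d} {u}
          · exact absurd (q3 _ _ huX hvX) (q.asymm' huv)
          · exact (q2 _ _ huX hvX).2 huv
        · intro hs
          have hd := hs (Finset.mem_filter.2 ⟨Finset.mem_univ d, hdω, w, hw, hdw⟩)
          simp only [Finset.mem_filter, Finset.mem_univ, true_and] at hd
          obtain ⟨hu1, v, hv, huv⟩ := hd
          have hvX : ¬ (v ∉ ω.bundle i ∧ (P i).weak {d} {v}) := fun h => h.1 hv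
          exact q.asymm' huv (q3 d v ⟨hdω, Or.inr rfl⟩ hvX)
    have hphi := IH _ hQ hsz i
    rw [h2 i q hbest] at hphi
    have hub := update_best (pref := P) (pref' := Function.update P i q) (i := i) (p' := q)
      (by simp) (fun j hj => by simp [hj]) (hbest S (Finset.Subset.refl _))
    have hsub := TTCaux_sub (Function.update P i q) ω.owner (f + 1) S i
    have hbA : b ∈ TTCaux (Function.update P i q) ω.owner (f + 1) S i := by
      rw [TTCaux_succ' _ _ _ hS, gS_congr _ hub, Cyc_congr _ hub, hb]
      exact Finset.mem_union_left _ (Finset.mem_image_of_mem _ ((mem_fil _ _ _ _).2 ⟨ho, hi.symm⟩))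
    have htp := hTP P hP i q hq ⟨d, q1, q2, q3⟩
    rw [← Pref.not_strict, hphi] at htp
    apply htp
    refine lex_strict_of (hP i) (x := b) (Finset.mem_union_right _ hbA) hg ?_
    intro y hyb hy
    have hyS : y ∈ S := by
      simp only [Finset.mem_union, Finset.mem_sdiff] at hy
      by_contra hc
      have : y ∉ TTCaux (Function.update P i q) ω.owner (f + 1) S i := fun h => hc (hsub h)
      tauto
    exact (P i).strict_of_weak_ne (hspec.2 y hyS) (Ne.symm hyb)
  · have hsub : (φ P).bundle i ∩ S ⊆ ω.bundle i ∩ S := by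
      intro u hu
      rw [Finset.mem_inter] at hu ⊢
      refine ⟨?_, hu.2⟩
      by_contra huω
      have hub : b ≠ u := by rintro rfl; exact hg hu.1
      -- worst endowment
      obtain ⟨w, hw, hmin⟩ := Finset.exists_min_image (ω.bundle i) (P i).rank (ω.nonempty i)
      have hwst : ∀ y ∈ ω.bundle i, (P i).weak {y} {w} := by
        intro y hy
        rw [← (P i).not_strict, ← (P i).rank_lt]
        exact not_lt.2 (hmin y hy)
      have huw := hWELB P hP i u hu.1 w hw hwst
      refine hA ⟨u, huω, (P i).strict_of_weak_ne (hspec.2 u hu.2) hub, w, hw, ?_⟩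
      refine (P i).strict_of_weak_ne huw ?_
      rintro rfl; exact huω hw
    have heq := Finset.eq_of_subset_of_card_le hsub (h3 i).ge
    have : o ∈ ω.bundle i ∩ S :=
      Finset.mem_inter.2 ⟨(owner_iff ω o i).1 hi.symm, Cyc_sub P ω.owner ho⟩
    rw [← heq] at this
    exact (Finset.mem_inter.1 this).1

lemma fwd_cycle (ω : Allocation N O) (μ : Allocation N O)
    (P : N → Pref O) (hP : ∀ i, Lexicographic (P i)) (hIGE : IGEat P μ.bundle)
    (S : Finset O) (hS : S.Nonempty)
    (hkey : ∀ o ∈ Cyc P ω.owner S, gS P ω.owner S o ∉ μ.bundle (ω.owner o) →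
      o ∈ μ.bundle (ω.owner o))
    (o : O) (ho : o ∈ Cyc P ω.owner S) : gS P ω.owner S o ∈ μ.bundle (ω.owner o) := by
  by_contra hg
  apply hIGE
  obtain ⟨g, hgd⟩ : ∃ g, g = gS P ω.owner S := ⟨_, rfl⟩
  rw [← hgd] at hg
  simp only [← hgd] at hkey
  have hoP := (mem_Cyc P ω.owner hS o).1 ho
  rw [← hgd] at hoP
  have hpos := Function.minimalPeriod_pos_of_mem_periodicPts hoP
  obtain ⟨k, hk⟩ : ∃ k, Function.minimalPeriod g o = k + 1 :=
    ⟨Function.minimalPeriod g o - 1, by omega⟩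
  have hC : ∀ n, g^[n] o ∈ Cyc P ω.owner S := by
    intro n
    induction n with
    | zero => exact ho
    | succ n ih => rw [Function.iterate_succ_apply', hgd]; rw [hgd] at ih; exact Cyc_maps _ _ hS ih
  have hback : ∀ x ∈ Cyc P ω.owner S, g (g x) ∉ μ.bundle (ω.owner (g x)) →
      g x ∉ μ.bundle (ω.owner x) := by
    intro x hx h hc
    have hx' : g x ∈ Cyc P ω.owner S := by rw [hgd]; exact Cyc_maps _ _ hS hx
    have h1 := hkey _ hx' h
    have hown : ω.owner x = ω.owner (g x) := by
      by_contra hne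
      exact μ.disj _ _ hne _ hc h1
    apply h
    have : g (g x) = g x := by
      rw [hgd]; rw [hgd] at hown; exact (gS_own P ω.owner hown).symm
    rw [this]; exact h1
  have hall' : ∀ j, j ≤ k + 1 → g (g^[k + 1 - j] o) ∉ μ.bundle (ω.owner (g^[k + 1 - j] o)) := by
    intro j
    induction j with
    | zero =>
      intro _
      have : g^[k + 1 - 0] o = o := by
        rw [Nat.sub_zero, ← hk]; exact Function.iterate_minimalPeriod
      rw [this]; exact hg
    | succ j ih =>
      intro hj
      have h1 := ih (by omega)
      have e : k + 1 - j = (k + 1 - (j + 1)) + 1 := by omega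
      rw [e, Function.iterate_succ_apply'] at h1
      exact hback _ (hC _) h1
  have hall : ∀ n, n ≤ k + 1 → g (g^[n] o) ∉ μ.bundle (ω.owner (g^[n] o)) := by
    intro n hn
    have := hall' (k + 1 - n) (by omega)
    rwa [show k + 1 - (k + 1 - n) = n by omega] at this
  have hinj : Function.Injective (fun ℓ : Fin (k + 1) => g^[(ℓ : ℕ)] o) := by
    intro a b hab
    apply Fin.ext
    exact Function.iterate_injOn_Iio_minimalPeriod (f := g) (x := o)
      (by rw [hk]; exact a.2) (by rw [hk]; exact b.2) hab
  have hsucc : ∀ ℓ : Fin (k + 1), g^[((ℓ + 1 : Fin (k + 1)) : ℕ)] o = g (g^[(ℓ : ℕ)] o) := by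
    intro ℓ
    rw [← Function.iterate_succ_apply' g, ← Function.iterate_mod_minimalPeriod_eq (n := (ℓ : ℕ) + 1),
      hk, Fin.val_add, Fin.val_one', Nat.add_mod_mod]
  refine ⟨k, fun ℓ => g^[(ℓ : ℕ)] o, fun ℓ => ω.owner (g^[(ℓ : ℕ)] o), hinj, ?_, ?_, ?_⟩
  · intro a b hab
    apply hinj
    refine Cyc_inj P ω.owner hS (hC _) (hC _) ?_
    exact gS_own P ω.owner hab
  · intro ℓ
    exact hkey _ (hC _) (hall _ (by omega))
  · intro ℓ
    have hm := hkey _ (hC ℓ) (hall _ (by omega))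
    refine (lex_swap (hP _) hm).2 ?_
    simp only [hsucc]
    refine ⟨hall _ (by omega), ?_⟩
    refine (P _).strict_of_weak_ne ?_ ?_
    · rw [hgd]; rw [hgd] at hC; exact gS_best P ω.owner (Cyc_sub P ω.owner (hC _)) _
    · intro he
      apply hall ℓ (by omega)
      rw [he]; exact hm

lemma fwd_ind (ω : Allocation N O) (φ : (N → Pref O) → Allocation N O)
    (hIGE : RIGE Lexicographic φ)
    (hWELB : RWELB Lexicographic ω φ) (hTP : RTP Lexicographic ω φ)
    (P : N → Pref O) (hP : ∀ i, Lexicographic (P i))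
    (IH : ∀ Q : N → Pref O, (∀ i, Lexicographic (Q i)) → sz ω Q < sz ω P →
      ∀ i, (φ Q).bundle i = TTC Q ω i)
    (f : ℕ) (S : Finset O) (hf : S.card ≤ f)
    (h2 : ∀ (i : N) (p' : Pref O), (∀ S', S ⊆ S' → p'.best S' = (P i).best S') →
      TTC (Function.update P i p') ω i =
        ((φ P).bundle i \ S) ∪ TTCaux (Function.update P i p') ω.owner f S i)
    (h3 : ∀ i, ((φ P).bundle i ∩ S).card = (ω.bundle i ∩ S).card) :
    ∀ i, (φ P).bundle i = TTC P ω i := by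
  induction f generalizing S with
  | zero =>
    intro i
    have : S = ∅ := by simpa using hf
    subst this
    have := h2 i (P i) (fun _ _ => rfl)
    rw [Function.update_eq_self] at this
    rw [this]; simp [TTCaux]
  | succ f ih =>
    rcases S.eq_empty_or_nonempty with rfl | hS
    · intro i
      have := h2 i (P i) (fun _ _ => rfl)
      rw [Function.update_eq_self] at this
      rw [this]; simp [TTCaux_empty]
    have hmem := fwd_cycle ω (φ P) P hP (hIGE P hP) S hS
      (fwd_key ω φ hWELB hTP P hP IH f S hS h2 h3)
    have himg : ∀ i, (φ P).bundle i ∩ Cyc P ω.owner S =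
        (fil ω.owner (Cyc P ω.owner S) i).image (gS P ω.owner S) := by
      intro i
      ext y
      rw [Finset.mem_inter, Finset.mem_image]
      constructor
      · rintro ⟨hy, hyC⟩
        obtain ⟨x, hx, rfl⟩ := Cyc_surj P ω.owner hS hyC
        refine ⟨x, (mem_fil _ _ _ _).2 ⟨hx, ?_⟩, rfl⟩
        by_contra hne
        exact (φ P).disj _ _ hne _ (hmem x hx) hy
      · rintro ⟨x, hx, rfl⟩
        obtain ⟨hx', rfl⟩ := (mem_fil _ _ _ _).1 hx
        exact ⟨hmem x hx', Cyc_maps P ω.owner hS hx'⟩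
    have hc := Cyc_card P ω.owner hS
    have hCS := Cyc_sub P ω.owner (S := S)
    refine ih (S \ Cyc P ω.owner S) (by omega) ?_ ?_
    · intro i p' hp'
      have hub := update_best (pref := P) (pref' := Function.update P i p') (i := i) (p' := p')
        (by simp) (fun j hj => by simp [hj]) (hp' S Finset.sdiff_subset)
      rw [h2 i p' (fun S' hS' => hp' S' (Finset.sdiff_subset.trans hS')),
        TTCaux_succ' _ _ _ hS, gS_congr _ hub, Cyc_congr _ hub, ← himg i, ← Finset.union_assoc]
      congr 1
      ext y
      simp only [Finset.mem_union, Finset.mem_sdiff, Finset.mem_inter]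
      have := @hCS y
      tauto
    · intro i
      have e1 : ∀ B : Finset O, (B ∩ S).card =
          (B ∩ Cyc P ω.owner S).card + (B ∩ (S \ Cyc P ω.owner S)).card := by
        intro B
        rw [← Finset.card_union_of_disjoint, ← Finset.inter_union_distrib_left,
          Finset.union_sdiff_of_subset hCS]
        exact (Finset.disjoint_sdiff).mono Finset.inter_subset_right Finset.inter_subset_right
      have e2 : (ω.bundle i ∩ Cyc P ω.owner S) =
          (fil ω.owner (Cyc P ω.owner S) i) := by
        ext y
        simp only [Finset.mem_inter, mem_fil, owner_iff]
        tauto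
      have h := h3 i
      have h4 := img_card' P ω.owner hS i
      have h5 := himg i
      rw [e1, e1, h5, e2] at h
      omega

lemma fwd (ω : Allocation N O) (φ : (N → Pref O) → Allocation N O)
    (hBAL : RBAL Lexicographic ω φ) (hIGE : RIGE Lexicographic φ)
    (hWELB : RWELB Lexicographic ω φ) (hTP : RTP Lexicographic ω φ) (n : ℕ) :
    ∀ P : N → Pref O, (∀ i, Lexicographic (P i)) → sz ω P = n →
      ∀ i, (φ P).bundle i = TTC P ω i := by
  induction n using Nat.strong_induction_on with
  | _ n ih =>
    intro P hP hn
    refine fwd_ind ω φ hIGE hWELB hTP P hP (fun Q hQ hlt => ih _ (by omega) Q hQ rfl)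
      (Fintype.card O + 1) Finset.univ (by simp) ?_ ?_
    · intro i p' _
      simp [TTC]
    · intro i
      simpa using hBAL P hP i

end forward

/-- On the lexicographic domain, a rule satisfies BAL, IGE, WELB and TP
iff it equals the generalized Top Trading Cycles rule. -/
theorem stmt1 {N O : Type} [Fintype N] [Fintype O] [DecidableEq N] [DecidableEq O] [Nonempty O]
    (hN : 2 ≤ Fintype.card N) (hNO : Fintype.card N ≤ Fintype.card O)
    (ω : Allocation N O) (φ : (N → Pref O) → Allocation N O) :
    (RBAL Lexicographic ω φ ∧ RIGE Lexicographic φ ∧ RWELB Lexicographic ω φ ∧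
        RTP Lexicographic ω φ) ↔
      ∀ P : N → Pref O, (∀ i, Lexicographic (P i)) → ∀ i, (φ P).bundle i = TTC P ω i := by
  constructor
  · rintro ⟨h1, h2, h3, h4⟩ P hP
    exact fwd ω φ h1 h2 h3 h4 _ P hP rfl
  · intro h
    exact ⟨back_BAL ω φ h, back_IGE ω φ h, back_WELB ω φ h, back_TP ω φ h⟩

end Realloc
end

section
/- Let N = {1,2}, O = {a,b,c,d}, and let the endowment be ω_1 = {a,d} and ω_2 = {b,c}. Then no rule on the responsive domain ℛ simultaneously satisfies Pareto efficiency (PE), individual rationality (IR), and marginality (MAR). -/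
attribute [local instance] Classical.propDecidable

namespace Realloc

variable {N O : Type}

section Helpers

attribute [-instance] Classical.propDecidable

/-- Utility weights with a + d > b + c. -/
def wA : Fin 4 → ℕ := ![8, 5, 4, 2]

/-- Utility weights with a + d < b + c. -/
def wB : Fin 4 → ℕ := ![7, 6, 5, 3]

theorem wA_inj : ∀ X Y : Finset (Fin 4), ∑ x ∈ X, wA x = ∑ x ∈ Y, wA x → X = Y := by
  decide

theorem wB_inj : ∀ X Y : Finset (Fin 4), ∑ x ∈ X, wB x = ∑ x ∈ Y, wB x → X = Y := by
  decide

theorem key_ir : ∀ X Y : Finset (Fin 4), (∀ x, x ∈ Y ↔ x ∉ X) →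
    10 ≤ ∑ x ∈ X, wA x → 11 ≤ ∑ x ∈ Y, wB x → X = {0, 3} ∧ Y = {1, 2} := by
  decide

theorem w_marg : ∀ x y : Fin 4, wA x < wA y ↔ wB x < wB y := by decide

/-- Additive preference with weights `w`. -/
def addPref (w : Fin 4 → ℕ)
    (h : ∀ X Y : Finset (Fin 4), ∑ x ∈ X, w x = ∑ x ∈ Y, w x → X = Y) : Pref (Fin 4) where
  strict X Y := ∑ x ∈ Y, w x < ∑ x ∈ X, w x
  total X Y := by
    rcases lt_trichotomy (∑ x ∈ Y, w x) (∑ x ∈ X, w x) with h1 | h1 | h1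
    · exact Or.inl h1
    · exact Or.inr (Or.inl (h X Y h1.symm))
    · exact Or.inr (Or.inr h1)
  irrefl X := lt_irrefl _
  trans X Y Z h1 h2 := lt_trans h2 h1

theorem addPref_resp (inst : DecidableEq (Fin 4)) (w h) : Responsive (addPref w h) := by
  intro X y z hy hz
  simp [addPref, Finset.sum_insert hy, Finset.sum_insert hz]

/-- The preference with weights `wA`. -/
def pA : Pref (Fin 4) := addPref wA wA_inj

/-- The preference with weights `wB`. -/
def pB : Pref (Fin 4) := addPref wB wB_inj

theorem marg_AB : MargEq pA pB := by
  intro x y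
  simpa [pA, pB, addPref] using w_marg y x

/-- The swapped allocation. -/
def swapAlloc : Allocation (Fin 2) (Fin 4) where
  bundle := ![{1, 2}, {0, 3}]
  nonempty := by decide
  disj := by decide
  cover := by decide

theorem weak_le (w h X Y) (hw : (addPref w h).weak X Y) : ∑ x ∈ Y, w x ≤ ∑ x ∈ X, w x := by
  rcases hw with hw | hw
  · exact le_of_lt hw
  · rw [hw]

theorem main_aux (inst : DecidableEq (Fin 4)) (ω : Allocation (Fin 2) (Fin 4))
    (hω1 : ω.bundle 0 = {0, 3}) (hω2 : ω.bundle 1 = {1, 2})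
    (φ : (Fin 2 → Pref (Fin 4)) → Allocation (Fin 2) (Fin 4)) :
    ¬ (RPE Responsive φ ∧ RIR Responsive ω φ ∧ RMAR Responsive φ) := by
  obtain rfl : inst = instDecidableEqFin 4 := Subsingleton.elim _ _
  rintro ⟨hPE, hIR, hMAR⟩
  have r1 : ∀ i, Responsive ((![pA, pB] : Fin 2 → Pref (Fin 4)) i) := by
    intro i
    fin_cases i
    · exact addPref_resp _ wA wA_inj
    · exact addPref_resp _ wB wB_inj
  have r2 : ∀ i, Responsive ((![pB, pA] : Fin 2 → Pref (Fin 4)) i) := by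
    intro i
    fin_cases i
    · exact addPref_resp _ wB wB_inj
    · exact addPref_resp _ wA wA_inj
  have hm := hMAR ![pA, pB] ![pB, pA] r1 r2 (by
    intro i
    fin_cases i
    · exact marg_AB
    · exact fun x y => (marg_AB x y).symm)
  have i0 := weak_le wA wA_inj _ _ (hIR ![pA, pB] r1 0)
  have i1 := weak_le wB wB_inj _ _ (hIR ![pA, pB] r1 1)
  rw [hω1] at i0
  rw [hω2] at i1
  have e0 : ∑ x ∈ ({0, 3} : Finset (Fin 4)), wA x = 10 := by decide
  have e1 : ∑ x ∈ ({1, 2} : Finset (Fin 4)), wB x = 11 := by decide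
  rw [e0] at i0
  rw [e1] at i1
  obtain ⟨h0, h1⟩ := key_ir _ ((φ ![pA, pB]).bundle 1) (by
    intro x
    constructor
    · exact (φ ![pA, pB]).disj 1 0 (by decide) x
    · intro hx
      obtain ⟨i, hi⟩ := (φ ![pA, pB]).cover x
      fin_cases i
      · exact absurd hi hx
      · exact hi) i0 i1
  have s0 : pB.strict (swapAlloc.bundle 0) ((φ ![pB, pA]).bundle 0) := by
    rw [← hm 0, h0]
    change ∑ x ∈ ({0, 3} : Finset (Fin 4)), wB x < ∑ x ∈ ({1, 2} : Finset (Fin 4)), wB x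
    decide
  have s1 : pA.strict (swapAlloc.bundle 1) ((φ ![pB, pA]).bundle 1) := by
    rw [← hm 1, h1]
    change ∑ x ∈ ({1, 2} : Finset (Fin 4)), wA x < ∑ x ∈ ({0, 3} : Finset (Fin 4)), wA x
    decide
  refine hPE ![pB, pA] r2 swapAlloc ⟨?_, 0, s0⟩
  intro i
  fin_cases i
  · exact Or.inl s0
  · exact Or.inl s1

end Helpers

/-- With N = {1,2}, O = {a,b,c,d} (encoded as `Fin 2`, `Fin 4` with
a,b,c,d = 0,1,2,3), ω₁ = {a,d}, ω₂ = {b,c}, no rule on the responsive domain satisfies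
PE, IR and MAR simultaneously. -/
theorem stmt4 (ω : Allocation (Fin 2) (Fin 4))
    (hω1 : ω.bundle 0 = {0, 3}) (hω2 : ω.bundle 1 = {1, 2})
    (φ : (Fin 2 → Pref (Fin 4)) → Allocation (Fin 2) (Fin 4)) :
    ¬ (RPE Responsive φ ∧ RIR Responsive ω φ ∧ RMAR Responsive φ) := by
  exact main_aux _ ω (by convert hω1) (by convert hω2) φ

end Realloc
end
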